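/- arXiv:2503.19790 — 2 statements merged into one kernel-verified Lean document; each statement's English description precedes it below -/
import Mathlib

section
/- Let D be a submodule of (Fin n → ZMod 2) whose orthogonal complement D^⊥ (with respect to the standard dot product) satisfies D^⊥ ≤ D, and let k = dim D − dim D^⊥. Then there exist a family w : Fin k → (Fin n → ZMod 2) with w j ∈ D for every j, and an involutive permutation σ of Fin k (σ ∘ σ = id), such that D = D^⊥ + span{w 0, …, w (k−1)} and, for all i, j, w i ⬝ w j = 1 if j = σ i and w i ⬝ w j = 0 otherwise. -/
/-!
The argument is a Gram-Schmidt process for symmetric forms in characteristic two. Call a finite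
family `a` hyperbolic with respect to an involution `σ` if its Gram matrix is the permutation
matrix of `σ`. For such a family, `d ↦ d - ∑ k, ⟨d, a (σ k)⟩ a k` projects onto the orthogonal
complement of the span of `a`. Hence a hyperbolic family in `D` splits off orthogonally from `D`,
and the remaining part `D'` has radical contained in the radical `D ⊓ D^⊥` of `D`.

As long as the form is nonzero on `D` there is something to split off: a single vector `u` with
`⟨u, u⟩ = 1` (a fixed point of `σ`), or, if the form is alternating on `D`, a pair with
`⟨u, v⟩ = 1` and `⟨u, u⟩ = ⟨v, v⟩ = 0` (a 2-cycle of `σ`). Well-founded induction on `D` then gives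
a hyperbolic family spanning `D` modulo its radical. Pairing with `a (σ j)` reads off the `j`-th
coefficient of a linear combination, so the family is linearly independent modulo the radical;
its size is therefore `dim D - dim D^⊥` when `D^⊥ ≤ D`.
-/

/-- Standard dot product over `ZMod 2`. -/
def dot {n : ℕ} (u v : Fin n → ZMod 2) : ZMod 2 := ∑ i, u i * v i

/-- Orthogonal complement of a submodule w.r.t. the standard dot product. -/
def orth {n : ℕ} (D : Submodule (ZMod 2) (Fin n → ZMod 2)) :
    Submodule (ZMod 2) (Fin n → ZMod 2) where
  carrier := {v | ∀ w ∈ D, dot v w = 0}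
  add_mem' := by
    intro a b ha hb w hw
    have h : dot (a + b) w = dot a w + dot b w := by
      simp [dot, add_mul, Finset.sum_add_distrib]
    rw [h, ha w hw, hb w hw, add_zero]
  zero_mem' := by
    intro w hw
    simp [dot]
  smul_mem' := by
    intro c v hv w hw
    have h : dot (c • v) w = c * dot v w := by
      simp [dot, Finset.mul_sum, mul_assoc]
    rw [h, hv w hw, mul_zero]

lemma dot_comm {n : ℕ} (u v : Fin n → ZMod 2) : dot u v = dot v u :=
  dotProduct_comm u v

lemma dot_sub_left {n : ℕ} (u v w : Fin n → ZMod 2) : dot (u - v) w = dot u w - dot v w :=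
  sub_dotProduct u v w

lemma dot_sum_smul_left {n : ℕ} {ι : Type} [Fintype ι] (c : ι → ZMod 2)
    (a : ι → Fin n → ZMod 2) (w : Fin n → ZMod 2) :
    dot (∑ k, c k • a k) w = ∑ k, c k * dot (a k) w := by
  change (∑ k, c k • a k) ⬝ᵥ w = ∑ k, c k * (a k ⬝ᵥ w)
  simp [sum_dotProduct, smul_dotProduct]

/-- The Gram matrix of the family `a` is the permutation matrix of the involution `σ`. -/
structure IsHyperbolic {n : ℕ} {ι : Type} [DecidableEq ι] (a : ι → Fin n → ZMod 2)
    (σ : ι → ι) : Prop where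
  invol : Function.Involutive σ
  gram : ∀ i j, dot (a i) (a j) = if j = σ i then 1 else 0

/-- Pairing with `a (σ j)` extracts the `j`-th coefficient. -/
lemma IsHyperbolic.dot_sum {n : ℕ} {ι : Type} [Fintype ι] [DecidableEq ι]
    {a : ι → Fin n → ZMod 2} {σ : ι → ι} (h : IsHyperbolic a σ) (c : ι → ZMod 2) (j : ι) :
    dot (∑ k, c k • a k) (a (σ j)) = c j := by
  rw [dot_sum_smul_left]
  simp [h.gram, h.invol.injective.eq_iff]

/-- `D` is spanned modulo its radical by a hyperbolic family of vectors of `D`. -/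
def HasHyperbolicBasis {n : ℕ} (D : Submodule (ZMod 2) (Fin n → ZMod 2)) : Prop :=
  ∃ (ι : Type) (_ : Fintype ι) (_ : DecidableEq ι) (a : ι → Fin n → ZMod 2) (σ : ι → ι),
    IsHyperbolic a σ ∧ (∀ i, a i ∈ D) ∧
      D ≤ (D ⊓ orth D) ⊔ Submodule.span (ZMod 2) (Set.range a)

lemma mem_orth_span {n : ℕ} {ι : Type} {a : ι → Fin n → ZMod 2} {v : Fin n → ZMod 2} :
    v ∈ orth (Submodule.span (ZMod 2) (Set.range a)) ↔ ∀ i, dot v (a i) = 0 := by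
  refine ⟨fun h i => h _ (Submodule.subset_span ⟨i, rfl⟩), fun h w hw => ?_⟩
  induction hw using Submodule.span_induction with
  | mem x hx => obtain ⟨i, rfl⟩ := hx; exact h i
  | zero => exact dotProduct_zero v
  | add x y _ _ hx hy => exact (dotProduct_add v x y).trans (by
      change dot v x + dot v y = 0
      rw [hx, hy, add_zero])
  | smul c x _ hx => exact (dotProduct_smul c v x).trans (by
      change c • dot v x = 0
      rw [hx, smul_zero])

/-- A hyperbolic family in `D` splits off: a hyperbolic basis of its orthogonal complement in `D`
extends by this family to one of `D`. -/
lemma HasHyperbolicBasis.of_split {n : ℕ} {D : Submodule (ZMod 2) (Fin n → ZMod 2)}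
    {κ : Type} [Fintype κ] [DecidableEq κ] {a : κ → Fin n → ZMod 2} {σ : κ → κ}
    (ha : IsHyperbolic a σ) (haD : ∀ k, a k ∈ D)
    (h : HasHyperbolicBasis (D ⊓ orth (Submodule.span (ZMod 2) (Set.range a)))) :
    HasHyperbolicBasis D := by
  obtain ⟨ι, _, _, b, τ, hb, hbD, hspan⟩ := h
  set D' := D ⊓ orth (Submodule.span (ZMod 2) (Set.range a)) with hD'
  have hba : ∀ i k, dot (b i) (a k) = 0 := fun i k => mem_orth_span.1 (hbD i).2 k
  have hproj : ∀ d ∈ D, d - ∑ k, dot d (a (σ k)) • a k ∈ D' := by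
    intro d hd
    refine ⟨D.sub_mem hd (D.sum_mem fun k _ => D.smul_mem _ (haD k)), ?_⟩
    rw [SetLike.mem_coe, mem_orth_span]
    intro j
    have := ha.dot_sum (fun k => dot d (a (σ k))) (σ j)
    rw [ha.invol j] at this
    rw [dot_sub_left, this, sub_self]
  have hrad : D' ⊓ orth D' ≤ D ⊓ orth D := by
    rintro x ⟨hx, hx'⟩
    refine ⟨hx.1, fun d hd => ?_⟩
    have h1 := hx' _ (hproj d hd)
    have h2 : dot (∑ k, dot d (a (σ k)) • a k) x = 0 := by
      rw [dot_sum_smul_left]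
      refine Finset.sum_eq_zero fun k _ => ?_
      rw [dot_comm (a k), mem_orth_span.1 hx.2 k, mul_zero]
    rw [dot_comm, dot_sub_left, h2, sub_zero] at h1
    rw [dot_comm, h1]
  refine ⟨κ ⊕ ι, inferInstance, inferInstance, Sum.elim a b, Sum.map σ τ, ⟨?_, ?_⟩, ?_, ?_⟩
  · rintro (k | i)
    · simp [ha.invol k]
    · simp [hb.invol i]
  · rintro (k | i) (l | j)
    · simp [ha.gram]
    · simp [dot_comm (a k), hba]
    · simp [hba]
    · simp [hb.gram]
  · rintro (k | i)
    · exact haD k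
    · exact (hbD i).1
  · intro d hd
    have h1 : D' ≤ (D ⊓ orth D) ⊔ Submodule.span (ZMod 2) (Set.range (Sum.elim a b)) :=
      hspan.trans (sup_le_sup hrad (Submodule.span_mono (by
        rintro _ ⟨i, rfl⟩
        exact ⟨Sum.inr i, rfl⟩)))
    have h2 : ∑ k, dot d (a (σ k)) • a k ∈
        (D ⊓ orth D) ⊔ Submodule.span (ZMod 2) (Set.range (Sum.elim a b)) :=
      Submodule.mem_sup_right (Submodule.sum_mem _ fun k _ => Submodule.smul_mem _ _
        (Submodule.subset_span ⟨Sum.inl k, rfl⟩))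
    simpa using Submodule.add_mem _ (h1 (hproj d hd)) h2

lemma zmod_two_eq_one {x : ZMod 2} (h : x ≠ 0) : x = 1 := by
  revert x; decide

/-- If the form does not vanish on `D`, then `D` contains a nonempty hyperbolic family. -/
lemma exists_hyperbolic_of_not_le_orth {n : ℕ} {D : Submodule (ZMod 2) (Fin n → ZMod 2)}
    (h : ¬ D ≤ orth D) :
    ∃ (κ : Type) (_ : Fintype κ) (_ : DecidableEq κ) (a : κ → Fin n → ZMod 2) (σ : κ → κ),
      Nonempty κ ∧ IsHyperbolic a σ ∧ ∀ k, a k ∈ D := by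
  by_cases hs : ∃ u ∈ D, dot u u ≠ 0
  · obtain ⟨u, hu, huu⟩ := hs
    exact ⟨Unit, inferInstance, inferInstance, fun _ => u, id, inferInstance,
      ⟨fun _ => rfl, fun _ _ => by simp [zmod_two_eq_one huu]⟩, fun _ => hu⟩
  · push Not at hs
    obtain ⟨u, hu, hu'⟩ := SetLike.not_le_iff_exists.1 h
    have : ∃ v ∈ D, dot u v ≠ 0 := by
      by_contra! hc
      exact hu' hc
    obtain ⟨v, hv, huv⟩ := this
    have huv := zmod_two_eq_one huv
    refine ⟨Bool, inferInstance, inferInstance, fun x => if x then u else v, not, inferInstance,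
      ⟨Bool.not_not, ?_⟩, ?_⟩
    · rintro (_ | _) (_ | _) <;> simp [hs u hu, hs v hv, huv, dot_comm v u]
    · rintro (_ | _) <;> simp [hu, hv]

theorem hasHyperbolicBasis {n : ℕ} (D : Submodule (ZMod 2) (Fin n → ZMod 2)) :
    HasHyperbolicBasis D := by
  induction D using WellFoundedLT.induction with
  | ind D ih =>
  by_cases h : D ≤ orth D
  · exact ⟨Empty, inferInstance, inferInstance, Empty.elim, id, ⟨fun _ => rfl, fun i => i.elim⟩,
      fun i => i.elim, le_sup_of_le_left (le_inf le_rfl h)⟩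
  · obtain ⟨κ, _, _, a, σ, ⟨k⟩, ha, haD⟩ := exists_hyperbolic_of_not_le_orth h
    refine .of_split ha haD (ih _ (lt_of_le_of_ne inf_le_left fun he => ?_))
    -- `a k` is not orthogonal to `a (σ k)`, so the complement is a proper submodule
    have hk := haD k
    rw [← he] at hk
    have := mem_orth_span.1 hk.2 (σ k)
    simp [ha.gram] at this

/-- A hyperbolic family spanning `D` modulo `orth D` has `dim D - dim (orth D)` members. -/
lemma IsHyperbolic.card_eq {n : ℕ} {D : Submodule (ZMod 2) (Fin n → ZMod 2)}
    {ι : Type} [Fintype ι] [DecidableEq ι] {a : ι → Fin n → ZMod 2} {σ : ι → ι}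
    (ha : IsHyperbolic a σ) (haD : ∀ i, a i ∈ D)
    (hspan : D = orth D ⊔ Submodule.span (ZMod 2) (Set.range a)) :
    Fintype.card ι = Module.finrank (ZMod 2) D - Module.finrank (ZMod 2) (orth D) := by
  have hcoef : ∀ c : ι → ZMod 2, ∑ k, c k • a k ∈ orth D → ∀ j, c j = 0 := fun c hc j => by
    rw [← ha.dot_sum c j]
    exact hc _ (haD _)
  have hli : LinearIndependent (ZMod 2) a := by
    rw [Fintype.linearIndependent_iff]
    exact fun c hc => hcoef c (by rw [hc]; exact Submodule.zero_mem _)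
  have hdisj : orth D ⊓ Submodule.span (ZMod 2) (Set.range a) = ⊥ := by
    rw [eq_bot_iff]
    rintro x ⟨hx, hx'⟩
    obtain ⟨c, rfl⟩ := (Submodule.mem_span_range_iff_exists_fun _).1 hx'
    have := hcoef c hx
    simp [this]
  have key := Submodule.finrank_sup_add_finrank_inf_eq (orth D)
    (Submodule.span (ZMod 2) (Set.range a))
  rw [hdisj, ← hspan, finrank_bot, finrank_span_eq_card hli] at key
  omega

/-- **Lemma 1.** For a binary code `D` with `D^⊥ ≤ D` and
`k = dim D − dim D^⊥`, there is a family of coset representatives generating `D` over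
`D^⊥` whose Gram matrix (w.r.t. the dot product) is the permutation matrix of an
involution `σ`. -/
theorem exists_coset_basis_with_involutive_gram
    (n : ℕ) (D : Submodule (ZMod 2) (Fin n → ZMod 2))
    (hD : orth D ≤ D) :
    ∃ (w : Fin (Module.finrank (ZMod 2) D - Module.finrank (ZMod 2) (orth D)) →
          (Fin n → ZMod 2))
      (σ : Equiv.Perm (Fin (Module.finrank (ZMod 2) D - Module.finrank (ZMod 2) (orth D)))),
        (∀ i, σ (σ i) = i) ∧
        (∀ j, w j ∈ D) ∧
        D = orth D ⊔ Submodule.span (ZMod 2) (Set.range w) ∧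
        (∀ i j, dot (w i) (w j) = if j = σ i then 1 else 0) := by
  obtain ⟨ι, _, _, a, σ, ha, haD, hspan⟩ := hasHyperbolicBasis D
  rw [inf_eq_right.2 hD] at hspan
  have hspan' : D = orth D ⊔ Submodule.span (ZMod 2) (Set.range a) :=
    le_antisymm hspan (sup_le hD (Submodule.span_le.2 (by rintro _ ⟨i, rfl⟩; exact haD i)))
  let e := Fintype.equivFinOfCardEq (ha.card_eq haD hspan')
  refine ⟨a ∘ e.symm, (e.symm.trans ha.invol.toPerm).trans e, fun i => ?_, fun j => haD _, ?_,
    fun i j => ?_⟩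
  · simp [ha.invol _]
  · rw [e.symm.surjective.range_comp]
    exact hspan'
  · simp only [Function.comp_apply, ha.gram, Equiv.symm_apply_eq]
    rfl
end

section
/- Let w : Fin k → (Fin n → ZMod 2) be a family of vectors and let σ be an involutive permutation of Fin k (σ ∘ σ = id) such that, for all i, j, w i ⬝ w j = 1 if j = σ i and w i ⬝ w j = 0 otherwise, where ⬝ is the standard dot product over ZMod 2. If σ has at least one fixed point, then there exists a family w' : Fin k → (Fin n → ZMod 2) such that span(range w') = span(range w) and, for all i, j, w' i ⬝ w' j = 1 if i = j and w' i ⬝ w' j = 0 otherwise. -/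
theorem dot_add_left {n : ℕ} (u v x : Fin n → ZMod 2) : dot (u + v) x = dot u x + dot v x := by
  simp [dot, add_mul, Finset.sum_add_distrib]

theorem dot_add_right {n : ℕ} (u v x : Fin n → ZMod 2) : dot x (u + v) = dot x u + dot x v := by
  simp [dot, mul_add, Finset.sum_add_distrib]

/-- The replacement family: at `a`, `b`, `c` it takes the values `w c + w a`, `w c + w b`,
`w a + w b + w c`, and it agrees with `w` elsewhere. -/
def mixTriple {n k : ℕ} (w : Fin k → (Fin n → ZMod 2)) (a b c : Fin k) :
    Fin k → (Fin n → ZMod 2) := fun i =>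
  if i = a then w c + w a else if i = b then w c + w b else
    if i = c then w a + w b + w c else w i

theorem span_mixTriple_le {n k : ℕ} (w : Fin k → (Fin n → ZMod 2)) (a b c : Fin k) :
    Submodule.span (ZMod 2) (Set.range (mixTriple w a b c)) ≤
      Submodule.span (ZMod 2) (Set.range w) := by
  have hw : ∀ i, w i ∈ Submodule.span (ZMod 2) (Set.range w) :=
    fun i => Submodule.subset_span ⟨i, rfl⟩
  rw [Submodule.span_le]
  rintro _ ⟨i, rfl⟩
  simp only [mixTriple, SetLike.mem_coe]
  split_ifs
  · exact add_mem (hw _) (hw _)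
  · exact add_mem (hw _) (hw _)
  · exact add_mem (add_mem (hw _) (hw _)) (hw _)
  · exact hw _

/-- Mixing twice returns the original family with `a` and `b` exchanged, so equality of
spans follows from the single inclusion `span_mixTriple_le`. -/
theorem mixTriple_mixTriple {n k : ℕ} (w : Fin k → (Fin n → ZMod 2)) {a b c : Fin k}
    (hab : a ≠ b) (hac : a ≠ c) (hbc : b ≠ c) (i : Fin k) :
    mixTriple (mixTriple w a b c) a b c i = w (Equiv.swap a b i) := by
  have key : ∀ x y z : ZMod 2, x + y + z + (z + x) = y ∧ x + y + z + (z + y) = x ∧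
      z + x + (z + y) + (x + y + z) = z := by decide
  by_cases ha : i = a
  · subst ha
    ext t
    simp [mixTriple, hac.symm, hbc.symm, (key _ _ _).1]
  by_cases hb : i = b
  · subst hb
    ext t
    simp [mixTriple, hab.symm, hac.symm, hbc.symm, (key _ _ _).2.1]
  rw [Equiv.swap_apply_of_ne_of_ne ha hb]
  by_cases hc : i = c
  · subst hc
    ext t
    simp [mixTriple, hab.symm, hac.symm, hbc.symm, (key _ _ _).2.2]
  · simp [mixTriple, ha, hb, hc]

theorem span_mixTriple {n k : ℕ} (w : Fin k → (Fin n → ZMod 2)) {a b c : Fin k}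
    (hab : a ≠ b) (hac : a ≠ c) (hbc : b ≠ c) :
    Submodule.span (ZMod 2) (Set.range (mixTriple w a b c)) =
      Submodule.span (ZMod 2) (Set.range w) := by
  refine le_antisymm (span_mixTriple_le w a b c) ?_
  have h : mixTriple (mixTriple w a b c) a b c = w ∘ Equiv.swap a b :=
    funext (mixTriple_mixTriple w hab hac hbc)
  have h' := span_mixTriple_le (mixTriple w a b c) a b c
  rwa [h, EquivLike.range_comp] at h'

/-- One mixing step: the swapped indices `a` and `σ a` become fixed, while the span
and the remaining values of `σ` are unchanged. -/
theorem exists_fix_pair {n k : ℕ} (w : Fin k → (Fin n → ZMod 2)) (σ : Fin k → Fin k)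
    (hinv : ∀ i, σ (σ i) = i)
    (hgram : ∀ i j, dot (w i) (w j) = if j = σ i then 1 else 0)
    {a c : Fin k} (hc : σ c = c) (ha : σ a ≠ a) :
    ∃ w' : Fin k → (Fin n → ZMod 2),
      Submodule.span (ZMod 2) (Set.range w') = Submodule.span (ZMod 2) (Set.range w) ∧
      (∀ i j, dot (w' i) (w' j) =
        if j = (if i = a ∨ i = σ a then i else σ i) then 1 else 0) := by
  obtain ⟨b, hb⟩ : ∃ b, σ a = b := ⟨_, rfl⟩
  have hba : σ b = a := by rw [← hb, hinv]
  have hab : a ≠ b := by rintro rfl; exact ha hb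
  have hac : a ≠ c := by rintro rfl; exact ha hc
  have hbc : b ≠ c := by rintro rfl; exact hac (hba.symm.trans hc)
  have two : (1 : ZMod 2) + 1 = 0 := by decide
  refine ⟨mixTriple w a b c, span_mixTriple w hab hac hbc, fun i j => ?_⟩
  rw [hb]
  -- Each entry is a sum of entries of the old Gram matrix, cancelling in pairs by `two`.
  simp only [mixTriple]
  split_ifs <;> simp only [dot_add_left, dot_add_right, hgram] <;> grind

/-- If the Gram matrix of a family `w` is the permutation matrix of an
involution `σ` with at least one fixed point, then the span of `w` also has an
orthonormal spanning family. -/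
theorem orthonormalize_involutive_gram_family
    (n k : ℕ) (w : Fin k → (Fin n → ZMod 2)) (σ : Equiv.Perm (Fin k))
    (hinv : ∀ i, σ (σ i) = i)
    (hgram : ∀ i j, dot (w i) (w j) = if j = σ i then 1 else 0)
    (hfix : ∃ i, σ i = i) :
    ∃ w' : Fin k → (Fin n → ZMod 2),
      Submodule.span (ZMod 2) (Set.range w') = Submodule.span (ZMod 2) (Set.range w) ∧
      (∀ i j, dot (w' i) (w' j) = if i = j then 1 else 0) := by
  -- The bundled permutation is replaced by a plain function so that each step can redefine it.
  suffices H : ∀ (m : ℕ) (w : Fin k → (Fin n → ZMod 2)) (σ : Fin k → Fin k),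
      (Finset.univ.filter fun i => σ i ≠ i).card = m → (∀ i, σ (σ i) = i) →
      (∀ i j, dot (w i) (w j) = if j = σ i then 1 else 0) → (∃ i, σ i = i) →
      ∃ w' : Fin k → (Fin n → ZMod 2),
        Submodule.span (ZMod 2) (Set.range w') = Submodule.span (ZMod 2) (Set.range w) ∧
        (∀ i j, dot (w' i) (w' j) = if i = j then 1 else 0) from
    H _ w σ rfl hinv hgram hfix
  intro m
  induction m using Nat.strong_induction_on with
  | _ m ih =>
    intro w σ hm hinv hgram hfix
    by_cases hall : ∀ i, σ i = i
    · refine ⟨w, rfl, fun i j => ?_⟩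
      rw [hgram, hall]
      simp only [eq_comm]
    · push Not at hall
      obtain ⟨a, ha⟩ := hall
      obtain ⟨c, hc⟩ := hfix
      obtain ⟨w₁, hspan, hgram₁⟩ := exists_fix_pair w σ hinv hgram hc ha
      have hlt : (Finset.univ.filter fun i => (if i = a ∨ i = σ a then i else σ i) ≠ i).card < m := by
        rw [← hm]
        apply Finset.card_lt_card
        rw [Finset.ssubset_iff_of_subset]
        · exact ⟨a, by simpa using ha, by simp⟩
        · intro i
          simp only [Finset.mem_filter, Finset.mem_univ, true_and]
          grind
      obtain ⟨w', hspan', hw'⟩ := ih _ hlt w₁ (fun i => if i = a ∨ i = σ a then i else σ i) rfl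
        (by intro i; grind) hgram₁ ⟨c, by grind⟩
      exact ⟨w', hspan'.trans hspan, hw'⟩
end
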